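/- Let f : A → B be a homomorphism of finitely generated abelian groups such that for every prime p and every integer m ≥ 1 the induced map f ⊗ id : A ⊗_ℤ ℤ/p^mℤ → B ⊗_ℤ ℤ/p^mℤ is bijective. Then f is bijective. -/

import Mathlib

/-!
Replace `ℤ` by a Noetherian ring `R` and `p` by a maximal ideal `P`. If `f ⊗ R ⧸ P` is surjective,
Nakayama's lemma yields an element outside `P` killing `coker f`. If all the `f ⊗ R ⧸ P ^ m` are
injective, every `x ∈ ker f` lies in `⋂ m, P ^ m M`, and Krull's intersection theorem yields an
element outside `P` killing `x`. An ideal contained in no maximal ideal is the unit ideal, so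
letting `P` vary gives `coker f = 0` and `ker f = 0`.
-/

open TensorProduct Function

section CommSemiring

variable {R M N : Type*} [CommSemiring R] [AddCommMonoid M] [Module R M] [AddCommMonoid N]
  [Module R N]

theorem mem_of_forall_isMaximal_exists_smul_mem (L : Submodule R M) (x : M)
    (h : ∀ P : Ideal R, P.IsMaximal → ∃ r ∉ P, r • x ∈ L) : x ∈ L := by
  let I : Ideal R := L.comap (LinearMap.toSpanSingleton R M x)
  suffices hI : I = ⊤ by simpa [I] using (Ideal.eq_top_iff_one I).mp hI
  by_contra hI
  obtain ⟨P, hP, hIP⟩ := Ideal.exists_le_maximal I hI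
  obtain ⟨r, hrP, hrx⟩ := h P hP
  exact hrP (hIP hrx)

theorem bijective_rTensor_congr {Q Q' : Type*} [AddCommMonoid Q] [Module R Q]
    [AddCommMonoid Q'] [Module R Q'] (e : Q ≃ₗ[R] Q') (f : M →ₗ[R] N) :
    Bijective (f.rTensor Q) ↔ Bijective (f.rTensor Q') := by
  have hcomm : e.lTensor N ∘ f.rTensor Q = f.rTensor Q' ∘ e.lTensor M := by
    ext t
    change (LinearMap.lTensor N e.toLinearMap ∘ₗ f.rTensor Q) t =
      (f.rTensor Q' ∘ₗ LinearMap.lTensor M e.toLinearMap) t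
    rw [LinearMap.lTensor_comp_rTensor, LinearMap.rTensor_comp_lTensor]
  rw [← (e.lTensor N).bijective.of_comp_iff', hcomm, (e.lTensor M).bijective.of_comp_iff]

end CommSemiring

section CommRing

variable {R M N : Type*} [CommRing R] [AddCommGroup M] [Module R M] [AddCommGroup N] [Module R N]

theorem eq_top_of_forall_isMaximal_sup_smul_eq_top [Module.Finite R M] (L : Submodule R M)
    (h : ∀ P : Ideal R, P.IsMaximal → L ⊔ (P • ⊤ : Submodule R M) = ⊤) : L = ⊤ := by
  refine Submodule.eq_top_iff'.mpr fun x ↦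
    mem_of_forall_isMaximal_exists_smul_mem L x fun P hP ↦ ?_
  obtain ⟨r, hrP, hrL⟩ := Submodule.exists_sub_one_mem_and_smul_le_of_fg_of_le_sup
    (P := ⊤) Module.Finite.fg_top le_top (h P hP).ge
  have hr : r ∉ P := fun hr ↦ hP.isPrime.one_notMem ((Submodule.sub_mem_iff_right P hr).mp hrP)
  exact ⟨r, hr, hrL (Submodule.smul_mem_pointwise_smul x r ⊤ trivial)⟩

theorem iInf_isMaximal_pow_smul_top_eq_bot [IsNoetherianRing R] [Module.Finite R M] :
    ⨅ (P : MaximalSpectrum R) (m : ℕ), (P.asIdeal ^ m • ⊤ : Submodule R M) = ⊥ := by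
  refine (Submodule.eq_bot_iff _).mpr fun x hx ↦
    mem_of_forall_isMaximal_exists_smul_mem (⊥ : Submodule R M) x fun P hP ↦ ?_
  obtain ⟨⟨r, hrP⟩, hrx : r • x = x⟩ :=
    (P.mem_iInf_smul_pow_eq_bot_iff x).mp ((Submodule.mem_iInf _).mp hx ⟨P, hP⟩)
  have hr : 1 - r ∉ P := fun hr ↦ hP.isPrime.one_notMem ((Submodule.sub_mem_iff_left P hrP).mp hr)
  exact ⟨1 - r, hr, by simp [sub_smul, hrx]⟩

theorem tmul_quotient_one_eq_zero_iff (I : Ideal R) (x : M) :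
    x ⊗ₜ[R] (1 : R ⧸ I) = 0 ↔ x ∈ I • (⊤ : Submodule R M) := by
  rw [← tensorQuotEquivQuotSMul_symm_mk, LinearEquiv.map_eq_zero_iff,
    Submodule.Quotient.mk_eq_zero]

theorem exists_tmul_quotient_one_eq (I : Ideal R) (t : M ⊗[R] (R ⧸ I)) :
    ∃ x : M, x ⊗ₜ[R] 1 = t := by
  obtain ⟨q, rfl⟩ := (tensorQuotEquivQuotSMul M I).symm.surjective t
  obtain ⟨x, rfl⟩ := Submodule.Quotient.mk_surjective _ q
  exact ⟨x, (tensorQuotEquivQuotSMul_symm_mk I x).symm⟩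

theorem ker_le_smul_top_of_injective_rTensor {f : M →ₗ[R] N} {I : Ideal R}
    (hf : Injective (f.rTensor (R ⧸ I))) : f.ker ≤ I • ⊤ := by
  intro x hx
  rw [← tmul_quotient_one_eq_zero_iff]
  apply hf
  rw [LinearMap.rTensor_tmul, LinearMap.mem_ker.mp hx, zero_tmul, map_zero]

theorem range_sup_smul_top_eq_top_of_surjective_rTensor {f : M →ₗ[R] N} {I : Ideal R}
    (hf : Surjective (f.rTensor (R ⧸ I))) : f.range ⊔ I • ⊤ = ⊤ := by
  refine Submodule.eq_top_iff'.mpr fun y ↦ ?_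
  obtain ⟨t, ht⟩ := hf (y ⊗ₜ 1)
  obtain ⟨x, rfl⟩ := exists_tmul_quotient_one_eq I t
  have hyx : y - f x ∈ I • (⊤ : Submodule R N) := by
    rw [← tmul_quotient_one_eq_zero_iff, sub_tmul, ← ht, LinearMap.rTensor_tmul, sub_self]
  exact Submodule.mem_sup.mpr ⟨f x, ⟨x, rfl⟩, y - f x, hyx, add_sub_cancel _ _⟩

theorem injective_of_forall_isMaximal_rTensor [IsNoetherianRing R] [Module.Finite R M]
    (f : M →ₗ[R] N)
    (h : ∀ P : Ideal R, P.IsMaximal → ∀ m : ℕ, 1 ≤ m → Injective (f.rTensor (R ⧸ P ^ m))) :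
    Injective f := by
  rw [← LinearMap.ker_eq_bot, eq_bot_iff, ← iInf_isMaximal_pow_smul_top_eq_bot (R := R)]
  refine le_iInf₂ fun P m ↦ ?_
  obtain rfl | hm := m.eq_zero_or_pos
  · simp
  · exact ker_le_smul_top_of_injective_rTensor (h P.asIdeal P.isMaximal m hm)

theorem surjective_of_forall_isMaximal_rTensor [Module.Finite R N] (f : M →ₗ[R] N)
    (h : ∀ P : Ideal R, P.IsMaximal → Surjective (f.rTensor (R ⧸ P))) : Surjective f :=
  LinearMap.range_eq_top.mp <| eq_top_of_forall_isMaximal_sup_smul_eq_top f.range fun P hP ↦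
    range_sup_smul_top_eq_top_of_surjective_rTensor (h P hP)

theorem statement11_general [IsNoetherianRing R] [Module.Finite R M] [Module.Finite R N]
    (f : M →ₗ[R] N)
    (h : ∀ P : Ideal R, P.IsMaximal → ∀ m : ℕ, 1 ≤ m → Bijective (f.rTensor (R ⧸ P ^ m))) :
    Bijective f :=
  ⟨injective_of_forall_isMaximal_rTensor f fun P hP m hm ↦ (h P hP m hm).injective,
    surjective_of_forall_isMaximal_rTensor f fun P hP ↦
      pow_one P ▸ (h P hP 1 le_rfl).surjective⟩

end CommRing

theorem exists_prime_eq_span_of_isMaximal_int {P : Ideal ℤ} (hP : P.IsMaximal) :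
    ∃ p : ℕ, p.Prime ∧ P = Ideal.span {(p : ℤ)} :=
  (Ideal.isPrime_int_iff.mp hP.isPrime).resolve_left
    (Ring.ne_bot_of_isMaximal_of_not_isField hP Int.not_isField)

/-- The additive isomorphism between the quotient of `ℤ` by the `m`-th power of the ideal `(n)` and
`ZMod (n ^ m)`, for passing between maximal ideals of `ℤ` and prime numbers. -/
noncomputable def quotientSpanPowEquivZMod (n m : ℕ) :
    (ℤ ⧸ Ideal.span {(n : ℤ)} ^ m) ≃ₗ[ℤ] ZMod (n ^ m) :=
  ((Ideal.quotEquivOfEq (by rw [Ideal.span_singleton_pow, Nat.cast_pow])).trans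
    (Int.quotientSpanNatEquivZMod (n ^ m))).toAddEquiv.toIntLinearEquiv

/-- Let `f : A → B` be a homomorphism of finitely generated abelian groups such
that for every prime `p` and every `m ≥ 1` the induced map
`f ⊗ id : A ⊗_ℤ ℤ/p^mℤ → B ⊗_ℤ ℤ/p^mℤ` is bijective. Then `f` is bijective. -/
theorem statement11 (A B : Type) [AddCommGroup A] [AddCommGroup B]
    [Module.Finite ℤ A] [Module.Finite ℤ B] (f : A →+ B)
    (h : ∀ p : ℕ, p.Prime → ∀ m : ℕ, 1 ≤ m →
      Function.Bijective
        (TensorProduct.map f.toIntLinearMap (LinearMap.id (R := ℤ) (M := ZMod (p ^ m))))) :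
    Function.Bijective f := by
  refine statement11_general f.toIntLinearMap fun P hP m hm ↦ ?_
  obtain ⟨p, hp, rfl⟩ := exists_prime_eq_span_of_isMaximal_int hP
  exact (bijective_rTensor_congr (quotientSpanPowEquivZMod p m) _).mpr (h p hp m hm)
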